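/- arXiv:0704.3109 — 2 statements merged into one kernel-verified Lean document; each statement's English description precedes it below -/
import Mathlib

section
/- Let (G,*) be a left quasigroup satisfying condition (5.1), (L,·) a left quasigroup, and π : L → G a bijection. Let M be either the ternary system (G, μ^G_1) with μ^G_1(a,b,c) = a*(b\c) or the ternary system (G, μ^G_2) with μ^G_2(a,b,c) = c*(b\a). Then the dynamical Yang–Baxter map R^{(L,M,π)}(λ) satisfies the unitary condition R^{(L,M,π)}(λ) ∘ P ∘ R^{(L,M,π)}(λ) = P for all λ ∈ L (where P(u,v) = (v,u)) if and only if (a*b)*c = (a*c)*b for all a,b,c ∈ G. -/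
/-- Condition (5.1) on a left quasigroup:
(a*c)\((a*b)*c) = (a'*c)\((a'*b)*c) for all a, a', b, c. -/
def Cond51 {G : Type*} (gm gld : G → G → G) : Prop :=
  ∀ a a' b c : G,
    gld (gm a c) (gm (gm a b) c) = gld (gm a' c) (gm (gm a' b) c)

/-- ξ_λ(u)(v) = λ\π⁻¹(μ(π(λ), π(λ·u), π((λ·u)·v))). -/
def xiMap {L M : Type*} (mul ld : L → L → L) (μ : M → M → M → M) (π : L ≃ M)
    (lam u v : L) : L :=
  ld lam (π.symm (μ (π lam) (π (mul lam u)) (π (mul (mul lam u) v))))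

/-- R^{(L,M,π)}(λ)(u,v) = ((λ·ξ_λ(u)(v))\((λ·u)·v), ξ_λ(u)(v)). -/
def Rmap {L M : Type*} (mul ld : L → L → L) (μ : M → M → M → M) (π : L ≃ M)
    (lam : L) (p : L × L) : L × L :=
  (ld (mul lam (xiMap mul ld μ π lam p.1 p.2)) (mul (mul lam p.1) p.2),
    xiMap mul ld μ π lam p.1 p.2)

theorem unitary_iff_aux {L M : Type*} (mul ld : L → L → L)
    (hmul : ∀ u w : L, mul u (ld u w) = w)
    (hld : ∀ u v : L, ld u (mul u v) = v)
    (μ : M → M → M → M) (π : L ≃ M) :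
    (∀ lam : L, Rmap mul ld μ π lam ∘ Prod.swap ∘ Rmap mul ld μ π lam = Prod.swap) ↔
      ∀ a b c : M, μ a (μ a b c) c = b := by
  constructor
  · intro h a b c
    have h1 := congrFun (h (π.symm a))
      (ld (π.symm a) (π.symm b), ld (π.symm b) (π.symm c))
    have h2 := congrArg Prod.snd h1
    simp only [Rmap, xiMap, Function.comp, Prod.swap, hmul, Equiv.apply_symm_apply] at h2
    have h3 := congrArg (fun x => π (mul (π.symm a) x)) h2
    simpa only [hmul, Equiv.apply_symm_apply] using h3
  · intro h lam
    funext p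
    obtain ⟨u, v⟩ := p
    simp only [Rmap, xiMap, Function.comp, Prod.swap, hmul, hld, Equiv.apply_symm_apply, h,
      Equiv.symm_apply_apply]

theorem muG_aux {G : Type*} (gm gld : G → G → G)
    (hgm : ∀ u w : G, gm u (gld u w) = w)
    (hgld : ∀ u v : G, gld u (gm u v) = v) :
    (∀ a b c : G, gm a (gld (gm a (gld b c)) c) = b) ↔
      (∀ a b c : G, gm (gm a b) c = gm (gm a c) b) := by
  constructor
  · intro h a x y
    have h1 := congrArg (gld a) (h a (gm a x) (gm (gm a x) y))
    rw [hgld, hgld, hgld] at h1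
    have h2 := congrArg (gm (gm a y)) h1
    rwa [hgm] at h2
  · intro h a b c
    have h1 := h a (gld b c) (gld a b)
    rw [hgm, hgm] at h1
    have h2 := congrArg (gld (gm a (gld b c))) h1
    rw [hgld] at h2
    have h3 := congrArg (gm a) h2
    rw [hgm] at h3
    exact h3.symm

/-- for M = (G, μ^G_1) with μ^G_1(a,b,c) = a*(b\c), or
M = (G, μ^G_2) with μ^G_2(a,b,c) = c*(b\a), the dynamical YB map R^{(L,M,π)}(λ)
satisfies the unitary condition iff (a*b)*c = (a*c)*b for all a,b,c ∈ G. -/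
theorem unitary_iff_muG1_muG2 {G L : Type*} [Nonempty G] [Nonempty L]
    (gm gld : G → G → G)
    (hgm : ∀ u w : G, gm u (gld u w) = w)
    (hgld : ∀ u v : G, gld u (gm u v) = v)
    (h51 : Cond51 gm gld)
    (mul ld : L → L → L)
    (hmul : ∀ u w : L, mul u (ld u w) = w)
    (hld : ∀ u v : L, ld u (mul u v) = v)
    (π : L ≃ G) :
    ((∀ lam : L,
        Rmap mul ld (fun a b c => gm a (gld b c)) π lam ∘ Prod.swap ∘
            Rmap mul ld (fun a b c => gm a (gld b c)) π lam = Prod.swap) ↔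
      (∀ a b c : G, gm (gm a b) c = gm (gm a c) b)) ∧
    ((∀ lam : L,
        Rmap mul ld (fun a b c => gm c (gld b a)) π lam ∘ Prod.swap ∘
            Rmap mul ld (fun a b c => gm c (gld b a)) π lam = Prod.swap) ↔
      (∀ a b c : G, gm (gm a b) c = gm (gm a c) b)) := by
  refine ⟨(unitary_iff_aux mul ld hmul hld _ π).trans (muG_aux gm gld hgm hgld), ?_⟩
  refine (unitary_iff_aux mul ld hmul hld _ π).trans ?_
  rw [← muG_aux gm gld hgm hgld]
  exact ⟨fun h a b c => h c b a, fun h a b c => h c b a⟩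
end

section
/- Let (G,*) be a left quasigroup satisfying conditions (5.6) and (5.7), (L,·) a left quasigroup, and π : L → G a bijection. Let M be the ternary system (G, μ^G_3) with μ^G_3(a,b,c) = b*(a\c). Then the dynamical Yang–Baxter map R^{(L,M,π)}(λ) satisfies the unitary condition R^{(L,M,π)}(λ) ∘ P ∘ R^{(L,M,π)}(λ) = P for all λ ∈ L (where P(u,v) = (v,u)) if and only if (a*b)*b = a for all a,b ∈ G. -/
/-- Condition (5.6) on a left quasigroup:
(b*c)*(a\((a*c)*((b*c)\(b*d)))) = b*(a\((a*c)*d)). -/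
def Cond56 {G : Type*} (gm gld : G → G → G) : Prop :=
  ∀ a b c d : G,
    gm (gm b c) (gld a (gm (gm a c) (gld (gm b c) (gm b d))))
      = gm b (gld a (gm (gm a c) d))

/-- Condition (5.7) on a left quasigroup:
(a*c)*((b*c)\(b*d)) = ((a*c)*d)*((b*(a\((a*c)*d)))\(b*d)). -/
def Cond57 {G : Type*} (gm gld : G → G → G) : Prop :=
  ∀ a b c d : G,
    gm (gm a c) (gld (gm b c) (gm b d))
      = gm (gm (gm a c) d) (gld (gm b (gld a (gm (gm a c) d))) (gm b d))

/-- for M = (G, μ^G_3) with μ^G_3(a,b,c) = b*(a\c), the dynamical YB map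
R^{(L,M,π)}(λ) satisfies the unitary condition iff (a*b)*b = a for all a,b ∈ G. -/
theorem unitary_iff_muG3 {G L : Type*} [Nonempty G] [Nonempty L]
    (gm gld : G → G → G)
    (hgm : ∀ u w : G, gm u (gld u w) = w)
    (hgld : ∀ u v : G, gld u (gm u v) = v)
    (h56 : Cond56 gm gld) (h57 : Cond57 gm gld)
    (mul ld : L → L → L)
    (hmul : ∀ u w : L, mul u (ld u w) = w)
    (hld : ∀ u v : L, ld u (mul u v) = v)
    (π : L ≃ G) :
    (∀ lam : L,
        Rmap mul ld (fun a b c => gm b (gld a c)) π lam ∘ Prod.swap ∘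
            Rmap mul ld (fun a b c => gm b (gld a c)) π lam = Prod.swap) ↔
      (∀ a b : G, gm (gm a b) b = a) := by
  constructor
  · intro h a b
    obtain ⟨g⟩ := ‹Nonempty G›
    have h1 := congrFun (h (π.symm g))
      (ld (π.symm g) (π.symm a), ld (π.symm a) (π.symm (gm g b)))
    have h2 := congrArg (fun p => π (mul (π.symm g) p.2)) h1
    simpa [Rmap, xiMap, hmul, hgld] using h2
  · intro h lam
    funext ⟨u, v⟩
    simp [Rmap, xiMap, hmul, hld, h]
end
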